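/- There exist constants ε₀ ∈ (0,1) and C > 0 with the following property. Let ν ∈ (0,1], k ∈ ℤ with |k| ≥ 1 and νk² ≥ 1, ε ∈ [0, ε₀], and λ ∈ ℝ. Let φ : [−1,1] → ℂ be four times continuously differentiable with φ(±1) = 0 and φ'(±1) = 0; set w = φ'' − k²φ, F(y) = −ν(w''(y) − k²w(y)) + ik(y−λ)w(y) − ε·ν^{1/3}|k|^{2/3}w(y), and ‖u‖_{L²} = (‖φ'‖_{L²}² + k²‖φ‖_{L²}²)^{1/2}. Then: (i) νk²‖w‖_{L²} ≤ C‖F‖_{L²} (in particular ν^{5/12}|k|^{5/6}‖w‖_{L²} ≤ C‖F‖_{L²}); and (ii) if M ≥ 0 dominates F in H^{−1}, then νk²‖u‖_{L²} ≤ C·M and ν|k|·‖w‖_{L²} ≤ C·M. -/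

import Mathlib

/-- The `L²` norm of a function on the interval `[-1,1]`. -/
noncomputable def nL2 (f : ℝ → ℂ) : ℝ :=
  (∫ y in Set.Icc (-1:ℝ) 1, ‖f y‖ ^ 2) ^ ((1:ℝ)/2)

/-- The `L²` pairing of two functions on the interval `[-1,1]`. -/
noncomputable def innI (f g : ℝ → ℂ) : ℂ :=
  ∫ y in Set.Icc (-1:ℝ) 1, f y * (starRingEnd ℂ) (g y)

/-- `M ≥ 0` dominates `F` in `H^{-1}` : `|⟨F, φ⟩| ≤ M ‖φ‖_{H¹}` for every `C¹` function
vanishing at `±1`. -/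
def Dominates (F : ℝ → ℂ) (M : ℝ) : Prop :=
  ∀ g : ℝ → ℂ, ContDiff ℝ 1 g → g (-1) = 0 → g 1 = 0 →
    ‖innI F g‖ ≤ M * ((nL2 g ^ 2 + nL2 (deriv g) ^ 2) ^ ((1:ℝ)/2))

/-!
Write `w = φ'' - k²φ` and `E = ‖φ'‖² + k²‖φ‖²`. Because `φ` and `φ'` vanish at the walls,
integrating by parts turns `Re ⟨F, φ⟩` into `-ν‖w‖²`, plus the shift term `δE`, plus a transport
term of which only `k Im ⟨φ', U'φ⟩` survives; the latter is at most `E / 2` when `|U'| ≤ 1`.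
Cauchy-Schwarz applied to `E = -⟨w, φ⟩` gives `k²E ≤ ‖w‖²`, so for `νk² ≥ 1` viscosity absorbs both
terms and `ν‖w‖² ≤ 4 |⟨F, φ⟩|`. The estimates follow by bounding the pairing either by `‖F‖ ‖φ‖` or
by the `H⁻¹` norm of `F`, `φ` itself being an admissible test function.
-/

open MeasureTheory Set
open scoped ComplexConjugate

section Pairing

variable {f f₁ f₂ g g₁ g₂ : ℝ → ℂ}

lemma nL2_nonneg (f : ℝ → ℂ) : 0 ≤ nL2 f :=
  Real.rpow_nonneg (integral_nonneg fun _ => by positivity) _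

lemma nL2_sq (f : ℝ → ℂ) : nL2 f ^ 2 = ∫ y in Icc (-1 : ℝ) 1, ‖f y‖ ^ 2 := by
  rw [nL2, ← Real.sqrt_eq_rpow, Real.sq_sqrt (integral_nonneg fun _ => by positivity)]

lemma continuous_ofReal_mul {U : ℝ → ℝ} (hU : Continuous U) (hf : Continuous f) :
    Continuous fun y => (U y : ℂ) * f y := by
  fun_prop

lemma nL2_ofReal_mul_le {U : ℝ → ℝ} {L : ℝ} (hf : Continuous f)
    (hU : ∀ y ∈ Icc (-1 : ℝ) 1, |U y| ≤ L) : nL2 (fun y => (U y : ℂ) * f y) ≤ L * nL2 f := by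
  have hL : 0 ≤ L := (abs_nonneg _).trans (hU 0 (by norm_num))
  refine le_of_sq_le_sq ?_ (mul_nonneg hL (nL2_nonneg f))
  rw [mul_pow, nL2_sq, nL2_sq, ← integral_const_mul]
  refine integral_mono_of_nonneg (.of_forall fun _ => by positivity)
    ((hf.norm.pow 2).integrableOn_Icc.const_mul _) ?_
  filter_upwards [ae_restrict_mem measurableSet_Icc] with y hy
  rw [norm_mul, mul_pow, Complex.norm_real, Real.norm_eq_abs]
  gcongr
  exact hU y hy

lemma innI_eq_intervalIntegral (f g : ℝ → ℂ) :
    innI f g = ∫ y in (-1 : ℝ)..1, f y * conj (g y) := by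
  rw [innI, intervalIntegral.integral_of_le (by norm_num), integral_Icc_eq_integral_Ioc]

lemma integrableOn_mul_conj (hf : Continuous f) (hg : Continuous g) :
    IntegrableOn (fun y => f y * conj (g y)) (Icc (-1) 1) :=
  (hf.mul (Complex.continuous_conj.comp hg)).integrableOn_Icc

lemma innI_add_left (hf₁ : Continuous f₁) (hf₂ : Continuous f₂) (hg : Continuous g) :
    innI (fun y => f₁ y + f₂ y) g = innI f₁ g + innI f₂ g := by
  simp only [innI, add_mul]
  exact integral_add (integrableOn_mul_conj hf₁ hg) (integrableOn_mul_conj hf₂ hg)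

lemma innI_sub_left (hf₁ : Continuous f₁) (hf₂ : Continuous f₂) (hg : Continuous g) :
    innI (fun y => f₁ y - f₂ y) g = innI f₁ g - innI f₂ g := by
  simp only [innI, sub_mul]
  exact integral_sub (integrableOn_mul_conj hf₁ hg) (integrableOn_mul_conj hf₂ hg)

lemma innI_const_mul_left (c : ℂ) (f g : ℝ → ℂ) :
    innI (fun y => c * f y) g = c * innI f g := by
  simp only [innI, mul_assoc]
  exact integral_const_mul c _

lemma conj_innI (f g : ℝ → ℂ) : conj (innI f g) = innI g f := by
  simp only [innI, ← integral_conj, map_mul, Complex.conj_conj, mul_comm]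

lemma innI_add_right (hf : Continuous f) (hg₁ : Continuous g₁) (hg₂ : Continuous g₂) :
    innI f (fun y => g₁ y + g₂ y) = innI f g₁ + innI f g₂ := by
  rw [← conj_innI, innI_add_left hg₁ hg₂ hf, map_add, conj_innI, conj_innI]

lemma innI_sub_right (hf : Continuous f) (hg₁ : Continuous g₁) (hg₂ : Continuous g₂) :
    innI f (fun y => g₁ y - g₂ y) = innI f g₁ - innI f g₂ := by
  rw [← conj_innI, innI_sub_left hg₁ hg₂ hf, map_sub, conj_innI, conj_innI]

lemma innI_ofReal_mul_left (U : ℝ → ℝ) (f g : ℝ → ℂ) :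
    innI (fun y => (U y : ℂ) * f y) g = innI f (fun y => (U y : ℂ) * g y) := by
  simp only [innI, map_mul, Complex.conj_ofReal, mul_assoc, mul_left_comm]

lemma innI_const_ofReal_mul_right (c : ℝ) (f g : ℝ → ℂ) :
    innI f (fun y => (c : ℂ) * g y) = c * innI f g := by
  rw [← innI_ofReal_mul_left fun _ => c, innI_const_mul_left]

lemma innI_self (f : ℝ → ℂ) : innI f f = (nL2 f ^ 2 : ℝ) := by
  simp only [innI, nL2_sq, Complex.mul_conj, Complex.normSq_eq_norm_sq]
  exact integral_ofReal

lemma im_innI_ofReal_mul_self (U : ℝ → ℝ) (f : ℝ → ℂ) :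
    (innI f fun y => (U y : ℂ) * f y).im = 0 := by
  rw [← Complex.conj_eq_iff_im, conj_innI, innI_ofReal_mul_left]

lemma norm_innI_le (hf : Continuous f) (hg : Continuous g) : ‖innI f g‖ ≤ nL2 f * nL2 g := by
  have memLp_two {h : ℝ → ℂ} (hh : Continuous h) :
      MemLp h (ENNReal.ofReal 2) (volume.restrict (Icc (-1 : ℝ) 1)) := by
    rw [ENNReal.ofReal_ofNat, memLp_two_iff_integrable_sq_norm hh.aestronglyMeasurable]
    exact (hh.norm.pow 2).integrableOn_Icc
  calc ‖innI f g‖ ≤ ∫ y in Icc (-1 : ℝ) 1, ‖f y * conj (g y)‖ := norm_integral_le_integral_norm _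
    _ = ∫ y in Icc (-1 : ℝ) 1, ‖f y‖ * ‖g y‖ := by simp only [norm_mul, RCLike.norm_conj]
    _ ≤ nL2 f * nL2 g := by
      simpa only [nL2, Real.rpow_two] using
        integral_mul_norm_le_Lp_mul_Lq .two_two (memLp_two hf) (memLp_two hg)

lemma innI_deriv_left (hf : ContDiff ℝ 1 f) (hg : ContDiff ℝ 1 g)
    (hgl : g (-1) = 0) (hgr : g 1 = 0) : innI (deriv f) g = -innI f (deriv g) := by
  have hf' (y : ℝ) : HasDerivAt f (deriv f y) y :=
    (hf.differentiable one_ne_zero y).hasDerivAt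
  have hg' (y : ℝ) : HasDerivAt (fun y => conj (g y)) (conj (deriv g y)) y :=
    (hg.differentiable one_ne_zero y).hasDerivAt.star
  have parts := intervalIntegral.integral_mul_deriv_eq_deriv_mul (a := -1) (b := 1)
    (fun y _ => hf' y) (fun y _ => hg' y) (hf.continuous_deriv_one.intervalIntegrable _ _)
    ((Complex.continuous_conj.comp hg.continuous_deriv_one).intervalIntegrable _ _)
  rw [innI_eq_intervalIntegral, innI_eq_intervalIntegral, parts]
  simp [hgl, hgr]

end Pairing

/-- The Fourier mode `f'' - k² f` of the Laplacian. It maps the stream function `φ` to the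
vorticity `w`. -/
noncomputable def modeLaplacian (k : ℝ) (f : ℝ → ℂ) : ℝ → ℂ :=
  fun y => deriv (deriv f) y - (k : ℂ) ^ 2 * f y

/-- The `L²` norm of the velocity `u = (φ', -ikφ)` with stream function `φ` at frequency `k`. -/
noncomputable def velocityNorm (k : ℝ) (φ : ℝ → ℂ) : ℝ :=
  (nL2 (deriv φ) ^ 2 + k ^ 2 * nL2 φ ^ 2) ^ ((1 : ℝ) / 2)

/-- The advection-diffusion operator `-ν(∂² - k²) + ikU - δ` with shear profile `U` and real
spectral shift `δ`. For the Couette profile `U = y - λ` it is the linearised vorticity operator. -/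
noncomputable def resolventOperator (ν k δ : ℝ) (U : ℝ → ℝ) (w : ℝ → ℂ) : ℝ → ℂ :=
  fun y => -(ν : ℂ) * modeLaplacian k w y + Complex.I * k * U y * w y - δ * w y

/-- The non-slip boundary condition for a stream function: it vanishes at `±1` together with its
derivative. -/
structure NonSlip (φ : ℝ → ℂ) : Prop where
  left : φ (-1) = 0
  right : φ 1 = 0
  deriv_left : deriv φ (-1) = 0
  deriv_right : deriv φ 1 = 0

section VelocityNorm

lemma velocityNorm_eq_sqrt (k : ℝ) (φ : ℝ → ℂ) :
    velocityNorm k φ = √(nL2 (deriv φ) ^ 2 + k ^ 2 * nL2 φ ^ 2) :=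
  (Real.sqrt_eq_rpow _).symm

lemma velocityNorm_nonneg (k : ℝ) (φ : ℝ → ℂ) : 0 ≤ velocityNorm k φ :=
  velocityNorm_eq_sqrt k φ ▸ Real.sqrt_nonneg _

lemma velocityNorm_sq (k : ℝ) (φ : ℝ → ℂ) :
    velocityNorm k φ ^ 2 = nL2 (deriv φ) ^ 2 + k ^ 2 * nL2 φ ^ 2 := by
  rw [velocityNorm_eq_sqrt, Real.sq_sqrt (by positivity)]

lemma abs_mul_nL2_le_velocityNorm (k : ℝ) (φ : ℝ → ℂ) : |k| * nL2 φ ≤ velocityNorm k φ := by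
  refine le_of_sq_le_sq ?_ (velocityNorm_nonneg k φ)
  rw [velocityNorm_sq, mul_pow, sq_abs]
  exact le_add_of_nonneg_left (sq_nonneg _)

lemma two_mul_abs_mul_nL2_mul_nL2_deriv_le (k : ℝ) (φ : ℝ → ℂ) :
    2 * (|k| * (nL2 (deriv φ) * nL2 φ)) ≤ velocityNorm k φ ^ 2 := by
  rw [velocityNorm_sq, ← sq_abs k, ← mul_pow]
  linarith [two_mul_le_add_sq (nL2 (deriv φ)) (|k| * nL2 φ)]

lemma sobolevNorm_le_velocityNorm {k : ℝ} (hk : 1 ≤ |k|) (φ : ℝ → ℂ) :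
    (nL2 φ ^ 2 + nL2 (deriv φ) ^ 2) ^ ((1 : ℝ) / 2) ≤ velocityNorm k φ := by
  rw [velocityNorm, add_comm]
  gcongr
  exact le_mul_of_one_le_left (sq_nonneg _) ((one_le_sq_iff_one_le_abs k).2 hk)

end VelocityNorm

section Regularity

variable {f : ℝ → ℂ}

lemma contDiff_modeLaplacian {n : WithTop ℕ∞} (k : ℝ) (hf : ContDiff ℝ (n + 2) f) :
    ContDiff ℝ n (modeLaplacian k f) :=
  have hf' : ContDiff ℝ (n + 1 + 1) f := by rwa [add_assoc, one_add_one_eq_two]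
  hf'.deriv'.deriv'.sub (contDiff_const.mul (hf.of_le le_self_add))

lemma continuous_modeLaplacian (k : ℝ) (hf : ContDiff ℝ 2 f) :
    Continuous (modeLaplacian k f) :=
  (contDiff_modeLaplacian (n := 0) k (by simpa using hf)).continuous

lemma continuous_resolventOperator (ν k δ : ℝ) {U : ℝ → ℝ} (hU : Continuous U)
    (hf : ContDiff ℝ 2 f) : Continuous (resolventOperator ν k δ U f) := by
  have hΔ := continuous_modeLaplacian k hf
  have hf₀ := hf.continuous
  unfold resolventOperator
  fun_prop

end Regularity

section Green

variable {f g φ : ℝ → ℂ}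

lemma innI_modeLaplacian_left (k : ℝ) (hf : ContDiff ℝ 2 f) (hg : ContDiff ℝ 1 g)
    (hgl : g (-1) = 0) (hgr : g 1 = 0) :
    innI (modeLaplacian k f) g = -innI (deriv f) (deriv g) - k ^ 2 * innI f g := by
  have hf' : ContDiff ℝ 1 (deriv f) := hf.deriv'
  unfold modeLaplacian
  rw [innI_sub_left hf'.continuous_deriv_one (hf.continuous.const_mul _) hg.continuous,
    innI_const_mul_left, innI_deriv_left hf' hg hgl hgr]

lemma innI_modeLaplacian_comm (k : ℝ) (hf : ContDiff ℝ 2 f) (hφ : ContDiff ℝ 2 φ)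
    (hbc : NonSlip φ) : innI (modeLaplacian k f) φ = innI f (modeLaplacian k φ) := by
  have hf₁ : ContDiff ℝ 1 f := hf.of_le one_le_two
  have hφ₁ : ContDiff ℝ 1 φ := hφ.of_le one_le_two
  have hφ' : ContDiff ℝ 1 (deriv φ) := hφ.deriv'
  rw [innI_modeLaplacian_left k hf hφ₁ hbc.left hbc.right,
    innI_deriv_left hf₁ hφ' hbc.deriv_left hbc.deriv_right]
  unfold modeLaplacian
  rw [innI_sub_right hf.continuous hφ'.continuous_deriv_one (hφ.continuous.const_mul _)]
  simp only [← Complex.ofReal_pow, innI_const_ofReal_mul_right, neg_neg]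

lemma innI_modeLaplacian_self (k : ℝ) (hφ : ContDiff ℝ 2 φ)
    (hl : φ (-1) = 0) (hr : φ 1 = 0) :
    innI (modeLaplacian k φ) φ = -(velocityNorm k φ ^ 2 : ℝ) := by
  rw [innI_modeLaplacian_left k hφ (hφ.of_le one_le_two) hl hr, innI_self, innI_self,
    velocityNorm_sq]
  push_cast
  ring

lemma im_innI_modeLaplacian_ofReal_mul {U : ℝ → ℝ} (k : ℝ) (hU : ContDiff ℝ 1 U)
    (hφ : ContDiff ℝ 2 φ) (hl : φ (-1) = 0) (hr : φ 1 = 0) :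
    (innI (modeLaplacian k φ) fun y => (U y : ℂ) * φ y).im =
      -(innI (deriv φ) fun y => ((deriv U y : ℝ) : ℂ) * φ y).im := by
  have hφ₁ : ContDiff ℝ 1 φ := hφ.of_le one_le_two
  have hUφ : ContDiff ℝ 1 fun y => (U y : ℂ) * φ y :=
    (Complex.ofRealCLM.contDiff.comp hU).mul hφ₁
  have deriv_mul : deriv (fun y => (U y : ℂ) * φ y) =
      fun y => ((deriv U y : ℝ) : ℂ) * φ y + (U y : ℂ) * deriv φ y := by
    funext y
    exact ((hU.differentiable one_ne_zero y).hasDerivAt.ofReal_comp.mul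
      (hφ₁.differentiable one_ne_zero y).hasDerivAt).deriv
  have hφ' := hφ₁.continuous_deriv_one
  rw [innI_modeLaplacian_left k hφ hUφ (by simp [hl]) (by simp [hr]), deriv_mul,
    innI_add_right hφ'
      (continuous_ofReal_mul hU.continuous_deriv_one hφ.continuous)
      (continuous_ofReal_mul hU.continuous hφ')]
  simp only [Complex.sub_im, Complex.neg_im, Complex.add_im, ← Complex.ofReal_pow,
    Complex.im_ofReal_mul, im_innI_ofReal_mul_self, mul_zero, sub_zero, add_zero]

lemma abs_mul_velocityNorm_le (k : ℝ) (hφ : ContDiff ℝ 2 φ)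
    (hl : φ (-1) = 0) (hr : φ 1 = 0) :
    |k| * velocityNorm k φ ≤ nL2 (modeLaplacian k φ) := by
  have energy_le : velocityNorm k φ ^ 2 ≤ nL2 (modeLaplacian k φ) * nL2 φ := by
    have := norm_innI_le (continuous_modeLaplacian k hφ) hφ.continuous
    rwa [innI_modeLaplacian_self k hφ hl hr, norm_neg, Complex.norm_real,
      Real.norm_of_nonneg (sq_nonneg _)] at this
  rcases (velocityNorm_nonneg k φ).eq_or_lt with hzero | hpos
  · rw [← hzero, mul_zero]
    exact nL2_nonneg _
  · refine le_of_mul_le_mul_right ?_ hpos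
    calc |k| * velocityNorm k φ * velocityNorm k φ
        = |k| * velocityNorm k φ ^ 2 := by ring
      _ ≤ |k| * (nL2 (modeLaplacian k φ) * nL2 φ) := by gcongr
      _ = nL2 (modeLaplacian k φ) * (|k| * nL2 φ) := by ring
      _ ≤ nL2 (modeLaplacian k φ) * velocityNorm k φ :=
        mul_le_mul_of_nonneg_left (abs_mul_nL2_le_velocityNorm k φ) (nL2_nonneg _)

lemma sq_mul_nL2_le (k : ℝ) (hφ : ContDiff ℝ 2 φ) (hl : φ (-1) = 0) (hr : φ 1 = 0) :
    k ^ 2 * nL2 φ ≤ nL2 (modeLaplacian k φ) :=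
  calc k ^ 2 * nL2 φ = |k| * (|k| * nL2 φ) := by rw [← mul_assoc, abs_mul_abs_self, sq]
    _ ≤ |k| * velocityNorm k φ :=
      mul_le_mul_of_nonneg_left (abs_mul_nL2_le_velocityNorm k φ) (abs_nonneg k)
    _ ≤ nL2 (modeLaplacian k φ) := abs_mul_velocityNorm_le k hφ hl hr

end Green

section Energy

variable {U : ℝ → ℝ} {φ : ℝ → ℂ}

lemma innI_resolventOperator {w g : ℝ → ℂ} (ν k δ : ℝ) (hU : Continuous U)
    (hw : ContDiff ℝ 2 w) (hg : Continuous g) :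
    innI (resolventOperator ν k δ U w) g = -ν * innI (modeLaplacian k w) g
      + Complex.I * k * innI w (fun y => (U y : ℂ) * g y) - δ * innI w g := by
  have hΔ := continuous_modeLaplacian k hw
  have hw₀ := hw.continuous
  unfold resolventOperator
  simp only [mul_assoc (Complex.I * (k : ℂ))]
  rw [innI_sub_left (by fun_prop) (by fun_prop) hg,
    innI_add_left (by fun_prop) (by fun_prop) hg, innI_const_mul_left, innI_const_mul_left,
    innI_const_mul_left, innI_ofReal_mul_left]

theorem re_innI_resolventOperator_modeLaplacian (ν k δ : ℝ) (hU : ContDiff ℝ 1 U)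
    (hφ : ContDiff ℝ 4 φ) (hbc : NonSlip φ) :
    (innI (resolventOperator ν k δ U (modeLaplacian k φ)) φ).re =
      -ν * nL2 (modeLaplacian k φ) ^ 2
        + k * (innI (deriv φ) fun y => ((deriv U y : ℝ) : ℂ) * φ y).im
        + δ * velocityNorm k φ ^ 2 := by
  have hφ₂ : ContDiff ℝ 2 φ := hφ.of_le (by norm_num)
  have hw : ContDiff ℝ 2 (modeLaplacian k φ) :=
    contDiff_modeLaplacian k (hφ.of_le (by norm_num))
  have transport_re (z : ℂ) : (Complex.I * k * z).re = -(k * z.im) := by simp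
  rw [innI_resolventOperator ν k δ hU.continuous hw hφ.continuous,
    innI_modeLaplacian_comm k hw hφ₂ hbc, innI_self,
    innI_modeLaplacian_self k hφ₂ hbc.left hbc.right, Complex.sub_re, Complex.add_re,
    transport_re, im_innI_modeLaplacian_ofReal_mul k hU hφ₂ hbc.left hbc.right,
    ← Complex.ofReal_neg, ← Complex.ofReal_neg, Complex.re_ofReal_mul, Complex.re_ofReal_mul,
    Complex.ofReal_re, Complex.ofReal_re]
  ring

lemma abs_mul_im_innI_deriv_ofReal_mul_le {L : ℝ} (k : ℝ) (hU : Continuous U)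
    (hUL : ∀ y ∈ Icc (-1 : ℝ) 1, |U y| ≤ L) (hφ : ContDiff ℝ 1 φ) :
    |k * (innI (deriv φ) fun y => (U y : ℂ) * φ y).im| ≤ L / 2 * velocityNorm k φ ^ 2 := by
  have hL : 0 ≤ L := (abs_nonneg _).trans (hUL 0 (by norm_num))
  calc |k * (innI (deriv φ) fun y => (U y : ℂ) * φ y).im|
      ≤ |k| * ‖innI (deriv φ) fun y => (U y : ℂ) * φ y‖ := by
        rw [abs_mul]
        gcongr
        exact Complex.abs_im_le_norm _
    _ ≤ |k| * (nL2 (deriv φ) * (L * nL2 φ)) := by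
        gcongr
        exact (norm_innI_le hφ.continuous_deriv_one
          (continuous_ofReal_mul hU hφ.continuous)).trans
          (mul_le_mul_of_nonneg_left (nL2_ofReal_mul_le hφ.continuous hUL) (nL2_nonneg _))
    _ = L / 2 * (2 * (|k| * (nL2 (deriv φ) * nL2 φ))) := by ring
    _ ≤ L / 2 * velocityNorm k φ ^ 2 := by
        gcongr
        exact two_mul_abs_mul_nL2_mul_nL2_deriv_le k φ

theorem mul_nL2_modeLaplacian_sq_le {L : ℝ} (ν k δ : ℝ) (hU : ContDiff ℝ 1 U)
    (hU' : ∀ y ∈ Icc (-1 : ℝ) 1, |deriv U y| ≤ L) (hφ : ContDiff ℝ 4 φ) (hbc : NonSlip φ) :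
    ν * nL2 (modeLaplacian k φ) ^ 2 ≤ (δ + L / 2) * velocityNorm k φ ^ 2
      + ‖innI (resolventOperator ν k δ U (modeLaplacian k φ)) φ‖ := by
  have energy := re_innI_resolventOperator_modeLaplacian ν k δ hU hφ hbc
  have transport :=
    (abs_le.1 (abs_mul_im_innI_deriv_ofReal_mul_le k hU.continuous_deriv_one hU'
      (hφ.of_le (by norm_num)))).2
  have pairing := (abs_le.1 (Complex.abs_re_le_norm
    (innI (resolventOperator ν k δ U (modeLaplacian k φ)) φ))).1
  linarith

theorem mul_nL2_modeLaplacian_sq_le_norm_innI {ν k δ : ℝ} (hνk : 1 ≤ ν * k ^ 2)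
    (hδ : δ ≤ ν * k ^ 2 / 4)
    (hU : ContDiff ℝ 1 U) (hU' : ∀ y ∈ Icc (-1 : ℝ) 1, |deriv U y| ≤ 1)
    (hφ : ContDiff ℝ 4 φ) (hbc : NonSlip φ) :
    ν * nL2 (modeLaplacian k φ) ^ 2 ≤
      4 * ‖innI (resolventOperator ν k δ U (modeLaplacian k φ)) φ‖ := by
  have hν : 0 < ν := pos_of_mul_pos_left (one_pos.trans_le hνk) (sq_nonneg k)
  have absorb : (δ + 1 / 2) * velocityNorm k φ ^ 2 ≤
      3 / 4 * (ν * nL2 (modeLaplacian k φ) ^ 2) :=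
    calc (δ + 1 / 2) * velocityNorm k φ ^ 2
        ≤ 3 / 4 * (ν * k ^ 2) * velocityNorm k φ ^ 2 := by
          gcongr
          linarith
      _ = 3 / 4 * (ν * (|k| * velocityNorm k φ) ^ 2) := by rw [mul_pow, sq_abs]; ring
      _ ≤ 3 / 4 * (ν * nL2 (modeLaplacian k φ) ^ 2) := by
          have := velocityNorm_nonneg k φ
          gcongr
          exact abs_mul_velocityNorm_le k (hφ.of_le (by norm_num)) hbc.left hbc.right
  linarith [mul_nL2_modeLaplacian_sq_le ν k δ hU hU' hφ hbc]

end Energy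

section Resolvent

variable {ν k δ : ℝ} {U : ℝ → ℝ} {φ : ℝ → ℂ}

theorem resolvent_estimate_L2 (hνk : 1 ≤ ν * k ^ 2) (hδ : δ ≤ ν * k ^ 2 / 4)
    (hU : ContDiff ℝ 1 U) (hU' : ∀ y ∈ Icc (-1 : ℝ) 1, |deriv U y| ≤ 1)
    (hφ : ContDiff ℝ 4 φ) (hbc : NonSlip φ) :
    ν * k ^ 2 * nL2 (modeLaplacian k φ) ≤
      4 * nL2 (resolventOperator ν k δ U (modeLaplacian k φ)) := by
  set w := modeLaplacian k φ
  set F := resolventOperator ν k δ U w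
  have hw : ContDiff ℝ 2 w := contDiff_modeLaplacian k (hφ.of_le (by norm_num))
  have coercivity := mul_nL2_modeLaplacian_sq_le_norm_innI hνk hδ hU hU' hφ hbc
  have pairing : ‖innI F φ‖ ≤ nL2 F * nL2 φ :=
    norm_innI_le (continuous_resolventOperator ν k δ hU.continuous hw) hφ.continuous
  rcases (nL2_nonneg w).eq_or_lt with hzero | hpos
  · rw [← hzero, mul_zero]
    exact mul_nonneg zero_le_four (nL2_nonneg F)
  · refine le_of_mul_le_mul_right ?_ hpos
    calc ν * k ^ 2 * nL2 w * nL2 w = k ^ 2 * (ν * nL2 w ^ 2) := by ring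
      _ ≤ k ^ 2 * (4 * (nL2 F * nL2 φ)) :=
        mul_le_mul_of_nonneg_left (by linarith) (sq_nonneg k)
      _ = 4 * nL2 F * (k ^ 2 * nL2 φ) := by ring
      _ ≤ 4 * nL2 F * nL2 w :=
        mul_le_mul_of_nonneg_left
          (sq_mul_nL2_le k (hφ.of_le (by norm_num)) hbc.left hbc.right)
          (mul_nonneg zero_le_four (nL2_nonneg F))

theorem resolvent_estimate_dual {M : ℝ} (hk : 1 ≤ |k|) (hνk : 1 ≤ ν * k ^ 2)
    (hδ : δ ≤ ν * k ^ 2 / 4) (hU : ContDiff ℝ 1 U)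
    (hU' : ∀ y ∈ Icc (-1 : ℝ) 1, |deriv U y| ≤ 1) (hφ : ContDiff ℝ 4 φ) (hbc : NonSlip φ)
    (hM : 0 ≤ M) (hdom : Dominates (resolventOperator ν k δ U (modeLaplacian k φ)) M) :
    ν * |k| * nL2 (modeLaplacian k φ) ≤ 4 * M := by
  set w := modeLaplacian k φ
  have coercivity := mul_nL2_modeLaplacian_sq_le_norm_innI hνk hδ hU hU' hφ hbc
  have pairing : ‖innI (resolventOperator ν k δ U w) φ‖ ≤ M * velocityNorm k φ :=
    (hdom φ (hφ.of_le (by norm_num)) hbc.left hbc.right).trans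
      (mul_le_mul_of_nonneg_left (sobolevNorm_le_velocityNorm hk φ) hM)
  rcases (nL2_nonneg w).eq_or_lt with hzero | hpos
  · rw [← hzero, mul_zero]
    exact mul_nonneg zero_le_four hM
  · refine le_of_mul_le_mul_right ?_ hpos
    calc ν * |k| * nL2 w * nL2 w = |k| * (ν * nL2 w ^ 2) := by ring
      _ ≤ |k| * (4 * (M * velocityNorm k φ)) :=
        mul_le_mul_of_nonneg_left (by linarith) (abs_nonneg k)
      _ = 4 * M * (|k| * velocityNorm k φ) := by ring
      _ ≤ 4 * M * nL2 w :=
        mul_le_mul_of_nonneg_left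
          (abs_mul_velocityNorm_le k (hφ.of_le (by norm_num)) hbc.left hbc.right)
          (mul_nonneg zero_le_four hM)

end Resolvent

section Scaling

variable {ν k : ℝ}

lemma rpow_mul_abs_rpow_le {s : ℝ} (hνk : 1 ≤ ν * k ^ 2) (hs : s ≤ 1) :
    ν ^ s * |k| ^ (2 * s) ≤ ν * k ^ 2 := by
  have hν : 0 < ν := pos_of_mul_pos_left (one_pos.trans_le hνk) (sq_nonneg k)
  calc ν ^ s * |k| ^ (2 * s) = (ν * k ^ 2) ^ s := by
        rw [Real.mul_rpow hν.le (sq_nonneg k), Real.rpow_mul (abs_nonneg k), Real.rpow_two, sq_abs]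
    _ ≤ ν * k ^ 2 := Real.rpow_le_self_of_one_le hνk hs

lemma spectralShift_le {ε : ℝ} (hνk : 1 ≤ ν * k ^ 2) (hε : ε ≤ 1 / 4) :
    ε * ν ^ ((1 : ℝ) / 3) * |k| ^ ((2 : ℝ) / 3) ≤ ν * k ^ 2 / 4 := by
  have hν : 0 < ν := pos_of_mul_pos_left (one_pos.trans_le hνk) (sq_nonneg k)
  have scaling : ν ^ ((1 : ℝ) / 3) * |k| ^ ((2 : ℝ) / 3) ≤ ν * k ^ 2 := by
    convert rpow_mul_abs_rpow_le (s := 1 / 3) hνk (by norm_num) using 3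
    norm_num
  calc ε * ν ^ ((1 : ℝ) / 3) * |k| ^ ((2 : ℝ) / 3)
      ≤ 1 / 4 * (ν ^ ((1 : ℝ) / 3) * |k| ^ ((2 : ℝ) / 3)) := by
        rw [mul_assoc]
        gcongr
    _ ≤ ν * k ^ 2 / 4 := by linarith

end Scaling

theorem statement9_general {ν k δ : ℝ} {U : ℝ → ℝ} {φ : ℝ → ℂ} (hk : 1 ≤ |k|)
    (hνk : 1 ≤ ν * k ^ 2) (hδ : δ ≤ ν * k ^ 2 / 4) (hU : ContDiff ℝ 1 U)
    (hU' : ∀ y ∈ Icc (-1 : ℝ) 1, |deriv U y| ≤ 1) (hφ : ContDiff ℝ 4 φ) (hbc : NonSlip φ) :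
    (ν * k ^ 2 * nL2 (modeLaplacian k φ) ≤
          4 * nL2 (resolventOperator ν k δ U (modeLaplacian k φ))
        ∧ ν ^ ((5 : ℝ) / 12) * |k| ^ ((5 : ℝ) / 6) * nL2 (modeLaplacian k φ) ≤
          4 * nL2 (resolventOperator ν k δ U (modeLaplacian k φ)))
      ∧ ∀ M : ℝ, 0 ≤ M → Dominates (resolventOperator ν k δ U (modeLaplacian k φ)) M →
        ν * k ^ 2 * velocityNorm k φ ≤ 4 * M
          ∧ ν * |k| * nL2 (modeLaplacian k φ) ≤ 4 * M := by
  have hν : 0 < ν := pos_of_mul_pos_left (one_pos.trans_le hνk) (sq_nonneg k)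
  have scaling : ν ^ ((5 : ℝ) / 12) * |k| ^ ((5 : ℝ) / 6) ≤ ν * k ^ 2 := by
    convert rpow_mul_abs_rpow_le (s := 5 / 12) hνk (by norm_num) using 3
    norm_num
  have hL2 := resolvent_estimate_L2 hνk hδ hU hU' hφ hbc
  refine ⟨⟨hL2, (mul_le_mul_of_nonneg_right scaling (nL2_nonneg _)).trans hL2⟩, ?_⟩
  intro M hM hdom
  have hdual := resolvent_estimate_dual hk hνk hδ hU hU' hφ hbc hM hdom
  refine ⟨?_, hdual⟩
  calc ν * k ^ 2 * velocityNorm k φ = ν * |k| * (|k| * velocityNorm k φ) := by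
        rw [← sq_abs]; ring
    _ ≤ ν * |k| * nL2 (modeLaplacian k φ) := by
        gcongr
        exact abs_mul_velocityNorm_le k (hφ.of_le (by norm_num)) hbc.left hbc.right
    _ ≤ 4 * M := hdual

/-- Resolvent estimates with non-slip boundary condition in the regime `ν k² ≥ 1`. -/
theorem statement9 :
    ∃ ε₀ C : ℝ, 0 < ε₀ ∧ ε₀ < 1 ∧ 0 < C ∧
      ∀ (ν : ℝ) (k : ℤ) (ε lam : ℝ) (φ w F : ℝ → ℂ),
        0 < ν → ν ≤ 1 → 1 ≤ |k| → 1 ≤ ν * (k:ℝ)^2 → 0 ≤ ε → ε ≤ ε₀ →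
        ContDiff ℝ 4 φ →
        φ (-1) = 0 → φ 1 = 0 → deriv φ (-1) = 0 → deriv φ 1 = 0 →
        (w = fun y : ℝ => deriv (deriv φ) y - (k:ℂ)^2 * φ y) →
        (F = fun y : ℝ => -(ν : ℂ) * (deriv (deriv w) y - (k:ℂ)^2 * w y)
            + Complex.I * (k:ℂ) * ((y:ℂ) - (lam:ℂ)) * w y
            - ((ε * ν ^ ((1:ℝ)/3) * |(k:ℝ)| ^ ((2:ℝ)/3) : ℝ) : ℂ) * w y) →
        (ν * (k:ℝ)^2 * nL2 w ≤ C * nL2 F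
          ∧ ν ^ ((5:ℝ)/12) * |(k:ℝ)| ^ ((5:ℝ)/6) * nL2 w ≤ C * nL2 F)
        ∧ ∀ M : ℝ, 0 ≤ M → Dominates F M →
            ν * (k:ℝ)^2 *
                ((nL2 (deriv φ) ^ 2 + (k:ℝ)^2 * nL2 φ ^ 2) ^ ((1:ℝ)/2)) ≤ C * M
            ∧ ν * |(k:ℝ)| * nL2 w ≤ C * M := by
  refine ⟨1 / 4, 4, by norm_num, by norm_num, by norm_num, ?_⟩
  intro ν k ε lam φ w F _ _ hk hνk _ hε hφ hl hr hl' hr' hw hF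
  have vorticity : w = modeLaplacian k φ := by
    ext y
    simp only [hw, modeLaplacian, Complex.ofReal_intCast]
  have forcing : F = resolventOperator ν k
      (ε * ν ^ ((1 : ℝ) / 3) * |(k : ℝ)| ^ ((2 : ℝ) / 3)) (fun y => y - lam) w := by
    ext y
    simp only [hF, resolventOperator, modeLaplacian, Complex.ofReal_intCast, Complex.ofReal_sub]
  rw [forcing, vorticity]
  exact statement9_general (mod_cast hk) hνk (spectralShift_le hνk hε) (by fun_prop) (by simp) hφ
    ⟨hl, hr, hl', hr'⟩
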